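/- arXiv:1905.04758 — 2 statements merged into one kernel-verified Lean document; each statement's English description precedes it below -/
import Mathlib

section
/- Suppose A has the binomial distribution with parameters n ≥ 1 and 0 < p < 1, i.e., ℙ[A = k] = C(n,k) p^k (1−p)^{n−k} for 0 ≤ k ≤ n. Then E[X²] < ∞ if and only if n²p² + n·p(1−p) < 1; for n ≥ 2 this condition is equivalent to p < (1/2)·√((5n − 4)/((n−1)²·n)) − 1/(2(n−1)), and for n = 1 it always holds. When the condition holds, Var(X) = n(p−1)p / ((np − 1)² (n²p² − n(p−1)p − 1)). -/
open MeasureTheory ProbabilityTheory ENNReal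


lemma aux_binom (n : ℕ) (p : ℝ) :
    (∑ k ∈ Finset.range (n+1), ((n.choose k : ℝ) * p ^ k * (1 - p) ^ (n - k)) = 1) ∧
    (∑ k ∈ Finset.range (n+1), (k : ℝ) * ((n.choose k : ℝ) * p ^ k * (1 - p) ^ (n - k)) = n * p) ∧
    (∑ k ∈ Finset.range (n+1), (k : ℝ)^2 * ((n.choose k : ℝ) * p ^ k * (1 - p) ^ (n - k))
      = (n : ℝ) ^ 2 * p ^ 2 + n * p * (1 - p)) := by
  have h0 := congrArg (Polynomial.eval p) (bernsteinPolynomial.sum ℝ n)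
  have h1 := congrArg (Polynomial.eval p) (bernsteinPolynomial.sum_smul ℝ n)
  have h2 := congrArg (Polynomial.eval p) (bernsteinPolynomial.sum_mul_smul ℝ n)
  simp only [Polynomial.eval_finsetSum, bernsteinPolynomial, Polynomial.eval_mul,
    Polynomial.eval_pow, Polynomial.eval_sub, Polynomial.eval_one, Polynomial.eval_X,
    Polynomial.eval_natCast, nsmul_eq_mul, Polynomial.eval_natCast] at h0 h1 h2
  refine ⟨h0, h1, ?_⟩
  have hc : ∀ k : ℕ, ((k * (k - 1) : ℕ) : ℝ) = (k : ℝ) ^ 2 - k := by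
    intro k
    cases k with
    | zero => simp
    | succ k => rw [Nat.add_sub_cancel]; push_cast; ring
  simp only [hc, sub_mul, Finset.sum_sub_distrib] at h2
  rw [h1] at h2
  linarith

lemma aux_moment {Ω : Type*} [MeasurableSpace Ω] {P : Measure Ω} [IsProbabilityMeasure P]
    {A : Ω → ℕ} (hA : Measurable A)
    (n : ℕ) (p : ℝ) (hp0 : 0 < p) (hp1 : p < 1)
    (hbin : ∀ k : ℕ, k ≤ n → P {ω | A ω = k} =
      ENNReal.ofReal ((n.choose k : ℝ) * p ^ k * (1 - p) ^ (n - k))) (f : ℕ → ℕ) :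
    ∫⁻ ω, (f (A ω) : ℝ≥0∞) ∂P = ENNReal.ofReal
      (∑ k ∈ Finset.range (n+1), (f k : ℝ) * ((n.choose k : ℝ) * p ^ k * (1 - p) ^ (n - k))) := by
  have hq : 0 < 1 - p := by linarith
  have hnn : ∀ k, 0 ≤ ((n.choose k : ℝ) * p ^ k * (1 - p) ^ (n - k)) := fun k => by positivity
  have hm : ∀ k, Measure.map A P {k} = P {ω | A ω = k} := fun k => by
    rw [Measure.map_apply hA (measurableSet_singleton k)]; rfl
  have : IsProbabilityMeasure (Measure.map A P) := Measure.isProbabilityMeasure_map hA.aemeasurable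
  have hS : Measure.map A P (Finset.range (n+1) : Set ℕ) = 1 := by
    rw [← sum_measure_singleton]
    rw [Finset.sum_congr rfl (fun k hk => (hm k).trans (hbin k (by simp at hk; omega))),
      ← ENNReal.ofReal_sum_of_nonneg (fun k _ => hnn k), (aux_binom n p).1, ENNReal.ofReal_one]
  have hz : Measure.map A P ((Finset.range (n+1) : Set ℕ)ᶜ) = 0 := by
    rw [prob_compl_eq_zero_iff (Finset.measurableSet _)]; exact hS
  rw [← lintegral_map (f := fun k => (f k : ℝ≥0∞)) (measurable_of_countable _) hA,
    lintegral_countable', tsum_eq_sum (s := Finset.range (n+1)),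
    ENNReal.ofReal_sum_of_nonneg (fun k _ => mul_nonneg (Nat.cast_nonneg _) (hnn k))]
  · refine Finset.sum_congr rfl fun k hk => ?_
    rw [hm, hbin k (by simp at hk; omega), ENNReal.ofReal_mul (Nat.cast_nonneg _),
      ENNReal.ofReal_natCast]
  · intro k hk
    have : Measure.map A P {k} = 0 := measure_mono_null (by simpa using hk) hz
    rw [this, mul_zero]

lemma aux_root (n : ℕ) (hn : 2 ≤ n) (p : ℝ) (hp0 : 0 < p) :
    ((n : ℝ) ^ 2 * p ^ 2 + n * p * (1 - p) < 1 ↔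
      p < (1 / 2) * Real.sqrt ((5 * n - 4) / (((n : ℝ) - 1) ^ 2 * n)) - 1 / (2 * ((n : ℝ) - 1))) := by
  have h2 : (2 : ℝ) ≤ n := by exact_mod_cast hn
  have hm : 0 < (n : ℝ) - 1 := by linarith
  have hn0 : 0 < (n : ℝ) := by linarith
  have e : 1 / (2 * ((n : ℝ) - 1)) = (1 / 2) * (1 / ((n : ℝ) - 1)) := by field_simp
  rw [e]
  have s1 : (p < (1 / 2) * Real.sqrt ((5 * n - 4) / (((n : ℝ) - 1) ^ 2 * n))
      - (1 / 2) * (1 / ((n : ℝ) - 1))) ↔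
      2 * p + 1 / ((n : ℝ) - 1) < Real.sqrt ((5 * n - 4) / (((n : ℝ) - 1) ^ 2 * n)) := by
    constructor <;> intro h <;> linarith
  rw [s1, Real.lt_sqrt (by positivity), lt_div_iff₀ (by positivity)]
  have e2 : (2 * p + 1 / ((n : ℝ) - 1)) ^ 2 * (((n : ℝ) - 1) ^ 2 * n)
      = (2 * p * ((n : ℝ) - 1) + 1) ^ 2 * n := by field_simp
  rw [e2]
  have e3 : (2 * p * ((n : ℝ) - 1) + 1) ^ 2 * n - (5 * n - 4)
      = (4 * ((n : ℝ) - 1)) * ((n : ℝ) ^ 2 * p ^ 2 + n * p * (1 - p) - 1) := by ring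
  constructor
  · intro h
    have := mul_neg_of_pos_of_neg (a := 4 * ((n : ℝ) - 1)) (by linarith) (sub_neg.2 h)
    linarith
  · intro h
    by_contra hc
    have := mul_nonneg (a := 4 * ((n : ℝ) - 1)) (by linarith) (sub_nonneg.2 (not_lt.1 hc))
    linarith

lemma aux_le {a m c : ℝ} (hm : m < 1) (h : a ≤ m * a + c) : a ≤ c / (1 - m) := by
  rw [le_div_iff₀ (by linarith)]; linarith

/-- Bound from a linear inequality in the extended reals. -/
lemma aux_le' {a c : ℝ≥0∞} {m : ℝ} (hm0 : 0 ≤ m) (hm : m < 1) (ha : a ≠ ⊤) (hc : c ≠ ⊤)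
    (h : a ≤ ENNReal.ofReal m * a + c) : a ≤ ENNReal.ofReal (c.toReal / (1 - m)) := by
  rw [ENNReal.le_ofReal_iff_toReal_le ha (div_nonneg ENNReal.toReal_nonneg (by linarith))]
  apply aux_le hm
  have := ENNReal.toReal_mono (by finiteness) h
  rwa [ENNReal.toReal_add (by finiteness) hc, ENNReal.toReal_mul, ENNReal.toReal_ofReal hm0] at this

lemma aux_min (N a x : ℕ) : min (a * x + 1) N ≤ a * min x N + 1 := by
  rcases Nat.eq_zero_or_pos a with rfl | ha
  · simp
  · rcases le_total x N with h | h
    · rw [min_eq_left h]; exact min_le_left _ _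
    · rw [min_eq_right h]
      exact (min_le_right _ _).trans (by nlinarith)

lemma aux_c1 {a b : ℕ} (h : a ≤ b) : (a : ℝ≥0∞) ≤ b := Nat.cast_le.2 h

lemma aux_c2 {a b : ℕ} (h : a ≤ b) : (a : ℝ≥0∞) ^ 2 ≤ (b : ℝ≥0∞) ^ 2 :=
  pow_le_pow_left₀ zero_le (aux_c1 h) 2

lemma aux_sup (x : ℕ) : (x : ℝ≥0∞) ^ 2 = ⨆ N : ℕ, ((min x N : ℕ) : ℝ≥0∞) ^ 2 := by
  apply le_antisymm
  · exact le_iSup_of_le x (by simp)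
  · exact iSup_le fun N => by gcongr; exact min_le_left _ _

section
variable {Ω : Type*} [MeasurableSpace Ω] {P : Measure Ω} [IsProbabilityMeasure P]
    {A X : Ω → ℕ} 

lemma aux_fix (hA : Measurable A) (hX : Measurable X)
    (hfix : Measure.map X P = Measure.map (fun ω => A ω * X ω + 1) P) (f : ℕ → ℝ≥0∞) :
    ∫⁻ ω, f (X ω) ∂P = ∫⁻ ω, f (A ω * X ω + 1) ∂P := by
  rw [← lintegral_map (f := f) (measurable_of_countable _) hX, hfix,
    lintegral_map (f := f) (measurable_of_countable _) 
      (show Measurable (fun ω => A ω * X ω + 1) from (hA.mul hX).add_const 1)]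

lemma aux_indep (hA : Measurable A) (hX : Measurable X) (hAX : IndepFun A X P)
    (f g : ℕ → ℝ≥0∞) :
    ∫⁻ ω, f (A ω) * g (X ω) ∂P = (∫⁻ ω, f (A ω) ∂P) * ∫⁻ ω, g (X ω) ∂P := by
  have hf := measurable_of_countable f
  have hg := measurable_of_countable g
  exact lintegral_mul_eq_lintegral_mul_lintegral_of_indepFun'' (hf.comp hA).aemeasurable
    (hg.comp hX).aemeasurable (hAX.comp hf hg)

lemma aux_e1 (hA : Measurable A) (hX : Measurable X) (hAX : IndepFun A X P) (g : ℕ → ℕ) :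
    ∫⁻ ω, ((A ω * g (X ω) + 1 : ℕ) : ℝ≥0∞) ∂P
      = (∫⁻ ω, (A ω : ℝ≥0∞) ∂P) * (∫⁻ ω, (g (X ω) : ℝ≥0∞) ∂P) + 1 := by
  have := aux_indep hA hX hAX (fun k => (k : ℝ≥0∞)) (fun k => (g k : ℝ≥0∞))
  rw [← this]
  push_cast
  rw [lintegral_add_right _ measurable_const]
  simp

lemma aux_e2 (hA : Measurable A) (hX : Measurable X) (hAX : IndepFun A X P) (g : ℕ → ℕ) :
    ∫⁻ ω, ((A ω * g (X ω) + 1 : ℕ) : ℝ≥0∞) ^ 2 ∂P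
      = (∫⁻ ω, ((A ω ^ 2 : ℕ) : ℝ≥0∞) ∂P) * (∫⁻ ω, (g (X ω) : ℝ≥0∞) ^ 2 ∂P) +
        (2 * ((∫⁻ ω, (A ω : ℝ≥0∞) ∂P) * (∫⁻ ω, (g (X ω) : ℝ≥0∞) ∂P)) + 1) := by
  have h1 := aux_indep hA hX hAX (fun k => (k : ℝ≥0∞)) (fun k => (g k : ℝ≥0∞))
  have h2 := aux_indep hA hX hAX (fun k => ((k ^ 2 : ℕ) : ℝ≥0∞)) (fun k => (g k : ℝ≥0∞) ^ 2)
  have m1 : Measurable fun ω => (A ω : ℝ≥0∞) * (g (X ω) : ℝ≥0∞) :=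
    (measurable_of_countable (fun q : ℕ × ℕ => (q.1 : ℝ≥0∞) * (g q.2 : ℝ≥0∞))).comp (hA.prodMk hX)
  rw [← h1, ← h2, ← lintegral_const_mul _ m1]
  have : (1 : ℝ≥0∞) = ∫⁻ _ω, 1 ∂P := by simp
  rw [this, ← lintegral_add_right _ measurable_const,
    ← lintegral_add_right _ ((m1.const_mul 2).add_const _)]
  refine lintegral_congr fun ω => ?_
  push_cast
  ring

end

theorem stmt_7 {Ω : Type*} [MeasurableSpace Ω] {P : Measure Ω} [IsProbabilityMeasure P]
    {A X : Ω → ℕ} (hA : Measurable A) (hX : Measurable X)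
    (hAX : IndepFun A X P)
    (h0 : 0 < P {ω | A ω = 0})
    (hfix : Measure.map X P = Measure.map (fun ω => A ω * X ω + 1) P)
    (n : ℕ) (hn : 1 ≤ n) (p : ℝ) (hp0 : 0 < p) (hp1 : p < 1)
    (hbin : ∀ k : ℕ, k ≤ n → P {ω | A ω = k} =
      ENNReal.ofReal ((n.choose k : ℝ) * p ^ k * (1 - p) ^ (n - k))) :
    ((∫⁻ ω, (X ω : ℝ≥0∞) ^ 2 ∂P) < ⊤ ↔ (n : ℝ) ^ 2 * p ^ 2 + n * p * (1 - p) < 1) ∧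
    (2 ≤ n → ((n : ℝ) ^ 2 * p ^ 2 + n * p * (1 - p) < 1 ↔
      p < (1 / 2) * Real.sqrt ((5 * n - 4) / (((n : ℝ) - 1) ^ 2 * n)) - 1 / (2 * ((n : ℝ) - 1)))) ∧
    (n = 1 → (n : ℝ) ^ 2 * p ^ 2 + n * p * (1 - p) < 1) ∧
    ((n : ℝ) ^ 2 * p ^ 2 + n * p * (1 - p) < 1 →
      (∫⁻ ω, (X ω : ℝ≥0∞) ^ 2 ∂P) - (∫⁻ ω, (X ω : ℝ≥0∞) ∂P) ^ 2 =
        ENNReal.ofReal ((n : ℝ) * (p - 1) * p /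
          (((n : ℝ) * p - 1) ^ 2 * ((n : ℝ) ^ 2 * p ^ 2 - n * (p - 1) * p - 1)))) := by
  have hq : 0 < 1 - p := by linarith
  have hn1 : (1 : ℝ) ≤ n := by exact_mod_cast hn
  have hm1 : ∫⁻ ω, (A ω : ℝ≥0∞) ∂P = ENNReal.ofReal (n * p) := by
    rw [← (aux_binom n p).2.1]
    exact aux_moment hA n p hp0 hp1 hbin (fun k => k)
  have hm2 : ∫⁻ ω, ((A ω ^ 2 : ℕ) : ℝ≥0∞) ∂P
      = ENNReal.ofReal ((n : ℝ) ^ 2 * p ^ 2 + n * p * (1 - p)) := by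
    rw [← (aux_binom n p).2.2, aux_moment hA n p hp0 hp1 hbin (fun k => k ^ 2)]
    push_cast; rfl
  set m1 : ℝ := n * p with hm1d
  set m2 : ℝ := (n : ℝ) ^ 2 * p ^ 2 + m1 * (1 - p) with hm2d
  have hm10 : 0 ≤ m1 := by positivity
  have hm20 : 0 ≤ m2 := by positivity
  have hm12 : m1 ≤ m2 := by
    have : m2 - m1 = n * p ^ 2 * (n - 1) := by rw [hm2d, hm1d]; ring
    have : 0 ≤ n * p ^ 2 * ((n : ℝ) - 1) := mul_nonneg (by positivity) (by linarith)
    linarith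
  have E1 : ∫⁻ ω, (X ω : ℝ≥0∞) ∂P = ENNReal.ofReal m1 * (∫⁻ ω, (X ω : ℝ≥0∞) ∂P) + 1 := by
    conv_lhs => rw [aux_fix hA hX hfix (fun k => (k : ℝ≥0∞))]
    rw [← hm1]
    exact aux_e1 hA hX hAX (fun k => k)
  have E2 : ∫⁻ ω, (X ω : ℝ≥0∞) ^ 2 ∂P = ENNReal.ofReal m2 * (∫⁻ ω, (X ω : ℝ≥0∞) ^ 2 ∂P)
      + (2 * (ENNReal.ofReal m1 * (∫⁻ ω, (X ω : ℝ≥0∞) ∂P)) + 1) := by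
    conv_lhs => rw [aux_fix hA hX hfix (fun k => (k : ℝ≥0∞) ^ 2)]
    rw [← hm1, ← hm2]
    exact aux_e2 hA hX hAX (fun k => k)
  have hfin : m2 < 1 → (∫⁻ ω, (X ω : ℝ≥0∞) ^ 2 ∂P) < ⊤ := by
    intro h
    have b1 : ∀ N : ℕ, ∫⁻ ω, ((min (X ω) N : ℕ) : ℝ≥0∞) ∂P ≤
        ENNReal.ofReal ((1 : ℝ≥0∞).toReal / (1 - m1)) := by
      intro N
      refine aux_le' hm10 (by linarith) (ne_of_lt ?_) (by simp) ?_
      · calc _ ≤ ∫⁻ _ω, (N : ℝ≥0∞) ∂P := lintegral_mono fun ω => by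
              exact aux_c1 (min_le_right _ _)
          _ < ⊤ := by simp
      · conv_lhs => rw [aux_fix hA hX hfix (fun k => ((min k N : ℕ) : ℝ≥0∞))]
        rw [← hm1, ← aux_e1 hA hX hAX (fun k => min k N)]
        exact lintegral_mono fun ω => by exact aux_c1 (aux_min _ _ _)
    set B := ENNReal.ofReal ((1 : ℝ≥0∞).toReal / (1 - m1)) with hB
    have hBt : B ≠ ⊤ := ENNReal.ofReal_ne_top
    have b2 : ∀ N : ℕ, ∫⁻ ω, ((min (X ω) N : ℕ) : ℝ≥0∞) ^ 2 ∂P ≤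
        ENNReal.ofReal ((2 * (ENNReal.ofReal m1 * B) + 1).toReal / (1 - m2)) := by
      intro N
      refine aux_le' hm20 h (ne_of_lt ?_) (by finiteness) ?_
      · calc _ ≤ ∫⁻ _ω, (N : ℝ≥0∞) ^ 2 ∂P := lintegral_mono fun ω => by
              exact aux_c2 (min_le_right _ _)
          _ < ⊤ := by simp
      · conv_lhs => rw [aux_fix hA hX hfix (fun k => ((min k N : ℕ) : ℝ≥0∞) ^ 2)]
        calc _ ≤ _ := lintegral_mono fun ω => by
              exact aux_c2 (aux_min _ _ _)
          _ = _ := aux_e2 hA hX hAX (fun k => min k N)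
          _ ≤ _ := by
            rw [hm1, hm2]
            gcongr
            exact b1 N
    have : ∫⁻ ω, (X ω : ℝ≥0∞) ^ 2 ∂P = ⨆ N : ℕ, ∫⁻ ω, ((min (X ω) N : ℕ) : ℝ≥0∞) ^ 2 ∂P := by
      rw [lintegral_congr fun ω => aux_sup (X ω)]
      refine lintegral_iSup (fun N => ?_) ?_
      · exact (measurable_of_countable (fun k : ℕ => ((min k N : ℕ) : ℝ≥0∞) ^ 2)).comp hX
      · intro N M hNM ω
        exact aux_c2 (min_le_min_left _ hNM)
    rw [this]
    exact (iSup_le b2).trans_lt ENNReal.ofReal_lt_top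
  have hb_le : ∫⁻ ω, (X ω : ℝ≥0∞) ∂P ≤ ∫⁻ ω, (X ω : ℝ≥0∞) ^ 2 ∂P :=
    lintegral_mono fun ω => by 
    have := aux_c1 (Nat.le_self_pow two_ne_zero (X ω))
    rwa [Nat.cast_pow] at this
  set a := ∫⁻ ω, (X ω : ℝ≥0∞) ^ 2 ∂P with ha
  set b := ∫⁻ ω, (X ω : ℝ≥0∞) ∂P with hb
  have R : a < ⊤ → b.toReal = m1 * b.toReal + 1 ∧
      a.toReal = m2 * a.toReal + (2 * (m1 * b.toReal) + 1) := by
    intro hat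
    have hat' : a ≠ ⊤ := hat.ne
    have hbt : b ≠ ⊤ := (hb_le.trans_lt hat).ne
    constructor
    · have := congrArg ENNReal.toReal E1
      rwa [ENNReal.toReal_add (by finiteness) (by finiteness), ENNReal.toReal_mul,
        ENNReal.toReal_ofReal hm10, ENNReal.toReal_one] at this
    · have := congrArg ENNReal.toReal E2
      rwa [ENNReal.toReal_add (by finiteness) (by finiteness),
        ENNReal.toReal_add (by finiteness) (by finiteness), ENNReal.toReal_mul,
        ENNReal.toReal_mul, ENNReal.toReal_mul,
        ENNReal.toReal_ofReal hm10, ENNReal.toReal_ofReal hm20, ENNReal.toReal_one,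
        ENNReal.toReal_ofNat] at this
  refine ⟨⟨fun hat => ?_, hfin⟩, fun h2 => aux_root n h2 p hp0, ?_, ?_⟩
  · obtain ⟨_, r2⟩ := R hat
    by_contra hc
    have h1 : 0 ≤ m1 * b.toReal := mul_nonneg hm10 ENNReal.toReal_nonneg
    have h3 := mul_le_mul_of_nonneg_right (not_lt.1 hc) (ENNReal.toReal_nonneg (a := a))
    linarith
  · intro h
    rw [hm2d, hm1d, h]; push_cast; nlinarith
  · intro h
    have hat := hfin h
    obtain ⟨r1, r2⟩ := R hat
    have hbt : b ≠ ⊤ := (hb_le.trans_lt hat).ne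
    rw [← ENNReal.ofReal_toReal hat.ne, ← ENNReal.ofReal_toReal hbt,
      ← ENNReal.ofReal_pow ENNReal.toReal_nonneg, ← ENNReal.ofReal_sub _ (by positivity)]
    congr 1
    have d1 : 1 - m1 ≠ 0 := by linarith
    have d2 : 1 - m2 ≠ 0 := by linarith
    have eb : b.toReal = 1 / (1 - m1) := by rw [eq_div_iff d1]; linarith
    have ea : a.toReal = (2 * (m1 * b.toReal) + 1) / (1 - m2) := by rw [eq_div_iff d2]; linarith
    have e3 : (n : ℝ) ^ 2 * p ^ 2 - n * (p - 1) * p - 1 = -(1 - m2) := by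
      rw [hm2d, hm1d]; ring
    have e4 : (n : ℝ) * (p - 1) * p = m1 ^ 2 - m2 := by
      rw [hm2d, hm1d]; ring
    have e5 : m1 - 1 ≠ 0 := by linarith
    rw [e3, e4, ea, eb]
    have e6 : (m1 - 1) ^ 2 = (1 - m1) ^ 2 := by ring
    rw [e6]
    field_simp
    ring
end

section
/- Suppose A has the geometric distribution with parameter 0 < p < 1, i.e., ℙ[A = k] = (1−p)^k · p for k ∈ ℕ. Then E[X²] < ∞ if and only if p > 2/3, and in that case Var(X) = −(p − 1)p² / ((1 − 2p)² (3p − 2)). -/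
open MeasureTheory ProbabilityTheory ENNReal

lemma aux_geo {Ω : Type*} [MeasurableSpace Ω] {P : Measure Ω}
    {A : Ω → ℕ} (hA : Measurable A) (p : ℝ) (hp0 : 0 < p) (hp1 : p < 1)
    (hgeo : ∀ k : ℕ, P {ω | A ω = k} = ENNReal.ofReal ((1 - p) ^ k * p))
    (f : ℕ → ℕ) (s : ℝ) (hs : HasSum (fun k => (f k : ℝ) * ((1 - p) ^ k * p)) s) :
    ∫⁻ ω, (f (A ω) : ℝ≥0∞) ∂P = ENNReal.ofReal s := by
  have h1 : ∫⁻ ω, (f (A ω) : ℝ≥0∞) ∂P = ∫⁻ k, (f k : ℝ≥0∞) ∂(Measure.map A P) := by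
    rw [lintegral_map (by fun_prop) hA]
  have hq : 0 < 1 - p := by linarith
  rw [h1, lintegral_countable', ← hs.tsum_eq,
    ENNReal.ofReal_tsum_of_nonneg (fun k => by positivity) hs.summable]
  refine tsum_congr fun k => ?_
  rw [Measure.map_apply hA (measurableSet_singleton k),
    ENNReal.ofReal_mul (by positivity), ENNReal.ofReal_natCast, ← hgeo k]
  rfl

lemma aux_sum1 (p : ℝ) (hp0 : 0 < p) (hp1 : p < 1) :
    HasSum (fun k : ℕ => ((k : ℕ) : ℝ) * ((1 - p) ^ k * p)) ((1 - p) / p) := by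
  have hn : ‖1 - p‖ < 1 := by rw [Real.norm_eq_abs, abs_lt]; constructor <;> linarith
  have h := (hasSum_coe_mul_geometric_of_norm_lt_one hn).mul_right p
  have e : (1 - (1 - p)) = p := by ring
  rw [e] at h
  have hf : (fun k : ℕ => ((k : ℕ) : ℝ) * ((1 - p) ^ k * p))
      = fun k : ℕ => (k : ℝ) * (1 - p) ^ k * p := by ext k; ring
  have hv : (1 - p) / p = (1 - p) / p ^ 2 * p := by field_simp
  rw [hf, hv]
  exact h

lemma aux_sum2 (p : ℝ) (hp0 : 0 < p) (hp1 : p < 1) :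
    HasSum (fun k : ℕ => ((k ^ 2 : ℕ) : ℝ) * ((1 - p) ^ k * p)) ((1 - p) * (2 - p) / p ^ 2) := by
  have hn : ‖1 - p‖ < 1 := by rw [Real.norm_eq_abs, abs_lt]; constructor <;> linarith
  have h2 := (hasSum_choose_mul_geometric_of_norm_lt_one 2 hn).mul_right (2 * p)
  have h1 := (hasSum_coe_mul_geometric_of_norm_lt_one hn).mul_right (3 * p)
  have h0 := (hasSum_geometric_of_norm_lt_one hn).mul_right (2 * p)
  have e : (1 - (1 - p)) = p := by ring
  have h := (h2.sub h1).sub h0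
  rw [e] at h
  have hf : (fun k : ℕ => ((k ^ 2 : ℕ) : ℝ) * ((1 - p) ^ k * p))
      = fun k : ℕ => ((Nat.choose (k + 2) 2 : ℕ) : ℝ) * (1 - p) ^ k * (2 * p)
        - (k : ℝ) * (1 - p) ^ k * (3 * p) - (1 - p) ^ k * (2 * p) := by
    ext k
    have : ((Nat.choose (k + 2) 2 : ℕ) : ℝ) = (k + 2) * (k + 1) / 2 := by
      rw [Nat.cast_choose_two]; push_cast; ring
    rw [this]; push_cast; ring
  have hv : (1 - p) * (2 - p) / p ^ 2
      = 1 / p ^ (2 + 1) * (2 * p) - (1 - p) / p ^ 2 * (3 * p) - p⁻¹ * (2 * p) := by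
    field_simp; ring
  rw [hf, hv]
  exact h

/-- moment computations for `A * Y + 1` -/
lemma aux_mom {Ω : Type*} [MeasurableSpace Ω] {P : Measure Ω} [IsProbabilityMeasure P]
    {A Y : Ω → ℕ} (hA : Measurable A) (hY : Measurable Y) (hAY : IndepFun A Y P) :
    (∫⁻ ω, ((A ω * Y ω + 1 : ℕ) : ℝ≥0∞) ∂P
      = (∫⁻ ω, (A ω : ℝ≥0∞) ∂P) * (∫⁻ ω, (Y ω : ℝ≥0∞) ∂P) + 1) ∧
    (∫⁻ ω, ((A ω * Y ω + 1 : ℕ) : ℝ≥0∞) ^ 2 ∂P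
      = (∫⁻ ω, ((A ω ^ 2 : ℕ) : ℝ≥0∞) ∂P) * (∫⁻ ω, (Y ω : ℝ≥0∞) ^ 2 ∂P)
        + 2 * ((∫⁻ ω, (A ω : ℝ≥0∞) ∂P) * (∫⁻ ω, (Y ω : ℝ≥0∞) ∂P)) + 1) := by
  have mA : Measurable (fun ω => (A ω : ℝ≥0∞)) := by fun_prop
  have mY : Measurable (fun ω => (Y ω : ℝ≥0∞)) := by fun_prop
  have m1 : Measurable (fun n : ℕ => (n : ℝ≥0∞)) := by fun_prop
  have m2 : Measurable (fun n : ℕ => (n : ℝ≥0∞) ^ 2) := by fun_prop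
  have e1 : ∫⁻ ω, (A ω : ℝ≥0∞) * (Y ω : ℝ≥0∞) ∂P = _ :=
    lintegral_mul_eq_lintegral_mul_lintegral_of_indepFun mA mY (hAY.comp m1 m1)
  have e2 : ∫⁻ ω, (A ω : ℝ≥0∞) ^ 2 * (Y ω : ℝ≥0∞) ^ 2 ∂P = _ :=
    lintegral_mul_eq_lintegral_mul_lintegral_of_indepFun (mA.pow_const 2) (mY.pow_const 2)
      (hAY.comp m2 m2)
  constructor
  · push_cast
    rw [lintegral_add_right _ measurable_const, e1]; simp
  · have : ∀ ω, ((A ω * Y ω + 1 : ℕ) : ℝ≥0∞) ^ 2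
        = (A ω : ℝ≥0∞) ^ 2 * (Y ω : ℝ≥0∞) ^ 2 + 2 * ((A ω : ℝ≥0∞) * (Y ω : ℝ≥0∞)) + 1 := by
      intro ω; push_cast; ring
    simp_rw [this]
    rw [lintegral_add_right _ measurable_const, lintegral_add_right _ (by fun_prop),
      lintegral_const_mul _ (by fun_prop), e1, e2]
    simp

lemma aux_bd (b c : ℝ) (hb : b < 1) (hb0 : 0 ≤ b) (hc : 0 ≤ c) (m : ℝ≥0∞) (hm : m ≠ ⊤)
    (h : m ≤ ENNReal.ofReal b * m + ENNReal.ofReal c) : m ≤ ENNReal.ofReal (c / (1 - b)) := by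
  lift m to NNReal using hm
  have h1 : (m : ℝ) ≤ b * m + c := by
    rw [← ENNReal.ofReal_coe_nnreal, ← ENNReal.ofReal_mul hb0,
      ← ENNReal.ofReal_add (by positivity) hc] at h
    exact (ENNReal.ofReal_le_ofReal_iff (by positivity)).1 h
  rw [← ENNReal.ofReal_coe_nnreal]
  apply ENNReal.ofReal_le_ofReal
  rw [le_div_iff₀ (by linarith)]
  linarith

lemma aux_eq (b c : ℝ) (hb : b < 1) (hb0 : 0 ≤ b) (hc : 0 ≤ c) (m : ℝ≥0∞) (hm : m ≠ ⊤)
    (h : m = ENNReal.ofReal b * m + ENNReal.ofReal c) : m = ENNReal.ofReal (c / (1 - b)) := by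
  lift m to NNReal using hm
  have h1 : (m : ℝ) = b * m + c := by
    rw [← ENNReal.ofReal_coe_nnreal, ← ENNReal.ofReal_mul hb0,
      ← ENNReal.ofReal_add (by positivity) hc] at h
    exact (ENNReal.ofReal_eq_ofReal_iff (by positivity) (by positivity)).1 h
  rw [← ENNReal.ofReal_coe_nnreal]
  congr 1
  rw [_root_.eq_div_iff (by linarith)]
  linarith

theorem stmt_11 {Ω : Type*} [MeasurableSpace Ω] {P : Measure Ω} [IsProbabilityMeasure P]
    {A X : Ω → ℕ} (hA : Measurable A) (hX : Measurable X)
    (hAX : IndepFun A X P)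
    (h0 : 0 < P {ω | A ω = 0})
    (hfix : Measure.map X P = Measure.map (fun ω => A ω * X ω + 1) P)
    (p : ℝ) (hp0 : 0 < p) (hp1 : p < 1)
    (hgeo : ∀ k : ℕ, P {ω | A ω = k} = ENNReal.ofReal ((1 - p) ^ k * p)) :
    ((∫⁻ ω, (X ω : ℝ≥0∞) ^ 2 ∂P) < ⊤ ↔ 2 / 3 < p) ∧
    (2 / 3 < p →
      (∫⁻ ω, (X ω : ℝ≥0∞) ^ 2 ∂P) - (∫⁻ ω, (X ω : ℝ≥0∞) ∂P) ^ 2 =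
        ENNReal.ofReal (-((p - 1) * p ^ 2) / ((1 - 2 * p) ^ 2 * (3 * p - 2)))) := by
  have hq : 0 < 1 - p := by linarith
  have hq2 : 0 < 2 - p := by linarith
  have ha := aux_geo hA p hp0 hp1 hgeo (fun k => k) _ (aux_sum1 p hp0 hp1)
  have hb := aux_geo hA p hp0 hp1 hgeo (fun k => k ^ 2) _ (aux_sum2 p hp0 hp1)
  have hb0 : 0 ≤ (1 - p) * (2 - p) / p ^ 2 := by positivity
  have ha0 : 0 ≤ (1 - p) / p := by positivity
  have key : ∀ g : ℕ → ℝ≥0∞, ∫⁻ ω, g (X ω) ∂P = ∫⁻ ω, g (A ω * X ω + 1) ∂P := by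
    intro g
    have hg : Measurable g := by fun_prop
    rw [← lintegral_map hg hX, hfix, lintegral_map hg (by fun_prop)]
  obtain ⟨M1, M2⟩ := aux_mom hA hX hAX
  rw [← key (fun n => (n : ℝ≥0∞)), ha] at M1
  rw [← key (fun n => (n : ℝ≥0∞) ^ 2), ha, hb] at M2
  have hfin : 2 / 3 < p → (∫⁻ ω, (X ω : ℝ≥0∞) ∂P) ≠ ⊤ ∧ (∫⁻ ω, (X ω : ℝ≥0∞) ^ 2 ∂P) ≠ ⊤ := by
    intro hp
    have hb1 : (1 - p) * (2 - p) / p ^ 2 < 1 := by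
      rw [div_lt_one (by positivity)]; nlinarith
    have ha1 : (1 - p) / p < 1 := by
      rw [div_lt_one (by positivity)]; linarith
    have hmin : ∀ n a x : ℕ, min (a * x + 1) n ≤ a * min x n + 1 := by
      intro n a x
      rcases Nat.eq_zero_or_pos a with rfl | h
      · simp
      · rcases le_total x n with h' | h'
        · rw [min_eq_left h']; exact min_le_left _ _
        · rw [min_eq_right h']
          exact (min_le_right _ _).trans (by nlinarith)
    have B : ∀ n : ℕ, (∫⁻ ω, ((min (X ω) n : ℕ) : ℝ≥0∞) ∂P)
          ≤ ENNReal.ofReal (1 / (1 - (1 - p) / p)) ∧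
        (∫⁻ ω, ((min (X ω) n : ℕ) : ℝ≥0∞) ^ 2 ∂P) ≤
          ENNReal.ofReal ((2 * ((1 - p) / p * (1 / (1 - (1 - p) / p))) + 1) /
            (1 - (1 - p) * (2 - p) / p ^ 2)) := by
      intro n
      have hmY : Measurable (fun ω => min (X ω) n) := by fun_prop
      obtain ⟨N1, N2⟩ := aux_mom hA hmY
        (hAX.comp measurable_id (measurable_of_countable (fun x : ℕ => min x n)))
      rw [ha] at N1
      rw [ha, hb] at N2
      have fin : ∀ k : ℕ, (∫⁻ ω, ((min (X ω) n : ℕ) : ℝ≥0∞) ^ k ∂P) ≠ ⊤ := by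
        intro k
        refine ne_top_of_le_ne_top (b := (n : ℝ≥0∞) ^ k) (by finiteness) ?_
        calc _ ≤ ∫⁻ ω, (n : ℝ≥0∞) ^ k ∂P := by
              refine lintegral_mono fun ω => ?_
              gcongr
              exact min_le_right _ _
          _ = _ := by simp
      have C1 : (∫⁻ ω, ((min (X ω) n : ℕ) : ℝ≥0∞) ∂P)
          ≤ ENNReal.ofReal (1 / (1 - (1 - p) / p)) := by
        refine aux_bd _ _ ha1 ha0 zero_le_one _ (by simpa using fin 1) ?_
        rw [ENNReal.ofReal_one, ← N1, key (fun x => ((min x n : ℕ) : ℝ≥0∞))]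
        refine lintegral_mono fun ω => ?_
        exact Nat.cast_le.2 (hmin n (A ω) (X ω))
      refine ⟨C1, ?_⟩
      have hpos : 0 ≤ 1 / (1 - (1 - p) / p) := by
        apply div_nonneg zero_le_one; linarith
      refine aux_bd _ _ hb1 hb0 (by positivity) _ (fin 2) ?_
      calc _ ≤ _ := by
            rw [key (fun x => ((min x n : ℕ) : ℝ≥0∞) ^ 2)]
            refine lintegral_mono (g := fun ω => ((A ω * min (X ω) n + 1 : ℕ) : ℝ≥0∞) ^ 2)
              fun ω => ?_
            have := hmin n (A ω) (X ω)
            dsimp only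
            gcongr
        _ = _ := N2
        _ ≤ _ := by
            rw [ENNReal.ofReal_add (by positivity) zero_le_one, ENNReal.ofReal_one,
              ENNReal.ofReal_mul (by norm_num), ENNReal.ofReal_mul ha0, ← add_assoc]
            norm_num only [ENNReal.ofReal_ofNat]
            gcongr
    have lim : ∀ k : ℕ, ∀ C : ℝ≥0∞, (∀ n : ℕ, (∫⁻ ω, ((min (X ω) n : ℕ) : ℝ≥0∞) ^ k ∂P) ≤ C) →
        (∫⁻ ω, (X ω : ℝ≥0∞) ^ k ∂P) ≤ C := by
      intro k C hC
      have hs : ∀ ω, (X ω : ℝ≥0∞) ^ k ≤ ⨆ n : ℕ, ((min (X ω) n : ℕ) : ℝ≥0∞) ^ k := by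
        intro ω
        refine le_trans ?_ (le_iSup _ (X ω))
        simp
      refine (lintegral_mono hs).trans ?_
      rw [lintegral_iSup (fun n => by fun_prop)]
      · exact iSup_le hC
      · intro n m hnm ω
        dsimp only
        gcongr
    refine ⟨?_, ne_top_of_le_ne_top ENNReal.ofReal_ne_top (lim 2 _ fun n => (B n).2)⟩
    have := lim 1 _ fun n => by simpa only [pow_one] using (B n).1
    simp only [pow_one] at this
    exact ne_top_of_le_ne_top ENNReal.ofReal_ne_top this
  refine ⟨⟨fun h => ?_, fun h => (hfin h).2.lt_top⟩, fun hp => ?_⟩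
  · by_contra hp
    have hb1 : 1 ≤ (1 - p) * (2 - p) / p ^ 2 := by
      rw [le_div_iff₀ (by positivity)]; nlinarith
    have : (∫⁻ ω, (X ω : ℝ≥0∞) ^ 2 ∂P) + 1 ≤ (∫⁻ ω, (X ω : ℝ≥0∞) ^ 2 ∂P) := by
      conv_rhs => rw [M2]
      gcongr
      refine le_trans ?_ le_self_add
      refine le_mul_of_one_le_left zero_le ?_
      simpa using ENNReal.ofReal_le_ofReal hb1
    exact absurd this (not_le.2 (ENNReal.lt_add_right h.ne one_ne_zero))
  · obtain ⟨f1, f2⟩ := hfin hp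
    have hb1 : (1 - p) * (2 - p) / p ^ 2 < 1 := by
      rw [div_lt_one (by positivity)]; nlinarith
    have ha1 : (1 - p) / p < 1 := by
      rw [div_lt_one (by positivity)]; linarith
    have E1 := aux_eq _ 1 ha1 ha0 zero_le_one _ f1 (by simpa using M1)
    have hpos : 0 ≤ 1 / (1 - (1 - p) / p) := by
      apply div_nonneg zero_le_one; linarith
    have E2 := aux_eq _ (2 * ((1 - p) / p * (1 / (1 - (1 - p) / p))) + 1) hb1 hb0
      (by positivity) _ f2 (by
        rw [ENNReal.ofReal_add (by positivity) zero_le_one, ENNReal.ofReal_one,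
              ENNReal.ofReal_mul (by norm_num), ENNReal.ofReal_mul ha0, ← add_assoc, ← E1,
              ENNReal.ofReal_ofNat]
        exact M2)
    rw [E1, E2, ← ENNReal.ofReal_pow hpos, ← ENNReal.ofReal_sub _ (by positivity)]
    congr 1
    have u : (2 * p - 1) ≠ 0 := by linarith
    have v : (3 * p - 2) ≠ 0 := by linarith
    have v2 : (p * 3 - 2) ≠ 0 := by linarith
    have u2 : (p * 2 - 1) ≠ 0 := by linarith
    have e1 : 1 - (1 - p) / p = (2 * p - 1) / p := by field_simp; ring
    have e2 : 1 - (1 - p) * (2 - p) / p ^ 2 = (3 * p - 2) / p ^ 2 := by field_simp; ring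
    have e3 : 1 - 2 * p = -(2 * p - 1) := by ring
    rw [e1, e2, e3, neg_sq]
    field_simp
    ring
end
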